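/- If S is a weakly infinite dimensional subset of the separable Hilbert space ℓ², then the complement ℓ² \ S is continuum connected: any two points of ℓ² \ S are contained in a compact connected subset of ℓ² \ S. -/

import Mathlib

open Set

/-- A separator between `A` and `B` in a topological space: a closed set `L` whose
complement is the union of two disjoint open sets containing `A` and `B` respectively. -/
def IsSeparator {X : Type*} [TopologicalSpace X] (A B L : Set X) : Prop :=
  IsClosed L ∧ ∃ U V : Set X, IsOpen U ∧ IsOpen V ∧ Disjoint U V ∧
    A ⊆ U ∧ B ⊆ V ∧ Lᶜ = U ∪ V

/-- A family of pairs of sets is essential if every choice of separators has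
nonempty intersection. -/
def IsEssentialFamily {X : Type*} [TopologicalSpace X] {Γ : Type*}
    (A B : Γ → Set X) : Prop :=
  ∀ L : Γ → Set X, (∀ i, IsSeparator (A i) (B i) (L i)) → (⋂ i, L i).Nonempty

/-- A space is strongly infinite dimensional if it admits a countably infinite
essential family of pairs of disjoint closed subsets. -/
def StronglyInfiniteDimensional (X : Type*) [TopologicalSpace X] : Prop :=
  ∃ A B : ℕ → Set X,
    (∀ n, IsClosed (A n) ∧ IsClosed (B n) ∧ Disjoint (A n) (B n)) ∧
    IsEssentialFamily A B

/-- The separable Hilbert space `ℓ²` of square-summable real sequences. -/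
abbrev EllTwo : Type := lp (fun _ : ℕ => ℝ) 2

/-!
Given distinct `x, y ∉ S`, map a Hilbert cube `I × I^ℕ` into the space so that the face `t = 0`
goes to `x`, the face `t = 1` goes to `y`, and the map is injective in between. The preimage of
`S` embeds into `S` as a closed subspace, so it is weakly infinite dimensional; hence the pairs of
opposite faces in the `I^ℕ` directions have separators in the cube whose intersection misses it.
The family of all pairs of opposite faces is essential, so no separator between the faces `t = 0`
and `t = 1` misses that intersection, and therefore one of its components meets both faces. The
image of this component is the required continuum.

That the faces are essential reduces by compactness to finite cubes. There one subdivides the cube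
into a fine grid, marks each vertex by the side of every separator on which it lies, and finds a
small cube on which no mark is constant because the cup product of the coboundaries of the marks,
summed modulo `2` over the grid, is `1` by the Stokes theorem.
-/

open Topology

/-! ### Separators and essential families -/

theorem IsSeparator.compl_union {X : Type*} [TopologicalSpace X] {A B U V : Set X}
    (hU : IsOpen U) (hV : IsOpen V) (hUV : Disjoint U V) (hAU : A ⊆ U) (hBV : B ⊆ V) :
    IsSeparator A B (U ∪ V)ᶜ :=
  ⟨(hU.union hV).isClosed_compl, U, V, hU, hV, hUV, hAU, hBV, compl_compl _⟩

theorem IsSeparator.preimage {X Y : Type*} [TopologicalSpace X] [TopologicalSpace Y] {f : X → Y}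
    (hf : Continuous f) {A B L : Set Y} (hL : IsSeparator A B L) :
    IsSeparator (f ⁻¹' A) (f ⁻¹' B) (f ⁻¹' L) := by
  obtain ⟨hLc, U, V, hU, hV, hUV, hAU, hBV, hLUV⟩ := hL
  refine ⟨hLc.preimage hf, f ⁻¹' U, f ⁻¹' V, hU.preimage hf, hV.preimage hf, hUV.preimage f,
    preimage_mono hAU, preimage_mono hBV, ?_⟩
  rw [← preimage_compl, hLUV, preimage_union]

theorem IsEssentialFamily.of_preimage {X Y Γ : Type*} [TopologicalSpace X] [TopologicalSpace Y]
    {f : X → Y} (hf : Continuous f) {A B : Γ → Set Y}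
    (h : IsEssentialFamily (fun i => f ⁻¹' A i) fun i => f ⁻¹' B i) : IsEssentialFamily A B := by
  intro L hL
  obtain ⟨x, hx⟩ := h (fun i => f ⁻¹' L i) fun i => (hL i).preimage hf
  exact ⟨f x, mem_iInter.2 fun i => mem_iInter.1 hx i⟩

theorem IsEssentialFamily.of_forall_finset {X Γ : Type*} [TopologicalSpace X] [CompactSpace X]
    {A B : Γ → Set X}
    (h : ∀ t : Finset Γ, IsEssentialFamily (fun i : t => A i) fun i : t => B i) :
    IsEssentialFamily A B := by
  intro L hL
  have hfin (t : Finset Γ) : (univ ∩ ⋂ i ∈ t, L i).Nonempty := by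
    simpa only [univ_inter, iInter_subtype] using h t (fun i => L i) fun i => hL i
  simpa only [univ_inter] using isCompact_univ.inter_iInter_nonempty L (fun i => (hL i).1) hfin

theorem StronglyInfiniteDimensional.of_isClosedEmbedding {X Y : Type*} [TopologicalSpace X]
    [TopologicalSpace Y] (hX : StronglyInfiniteDimensional X) {e : X → Y}
    (he : IsClosedEmbedding e) : StronglyInfiniteDimensional Y := by
  obtain ⟨A, B, hAB, hess⟩ := hX
  refine ⟨fun n => e '' A n, fun n => e '' B n, fun n => ?_, .of_preimage he.continuous ?_⟩
  · obtain ⟨hA, hB, hdisj⟩ := hAB n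
    exact ⟨he.isClosedMap _ hA, he.isClosedMap _ hB,
      (disjoint_image_iff he.injective).2 hdisj⟩
  · simpa only [preimage_image_eq _ he.injective] using hess

theorem StronglyInfiniteDimensional.of_preimage {X Y : Type*} [TopologicalSpace X]
    [TopologicalSpace Y] {φ : X → Y} (hφ : Continuous φ) (hφc : IsClosedMap φ) {S : Set Y}
    (hinj : InjOn φ (φ ⁻¹' S)) (h : StronglyInfiniteDimensional (φ ⁻¹' S)) :
    StronglyInfiniteDimensional S :=
  h.of_isClosedEmbedding <| .of_continuous_injective_isClosedMap (f := S.restrictPreimage φ)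
    hφ.restrictPreimage
    (fun a b hab => Subtype.ext (hinj a.2 b.2 (congrArg Subtype.val hab)))
    (hφc.restrictPreimage S)

theorem exists_isClosed_mem_nhdsSet_disjoint {X : Type*} [TopologicalSpace X] [NormalSpace X]
    {A B : Set X} (hA : IsClosed A) (hB : IsClosed B) (hAB : Disjoint A B) :
    ∃ A' ∈ 𝓝ˢ A, ∃ B' ∈ 𝓝ˢ B, IsClosed A' ∧ IsClosed B' ∧ Disjoint A' B' := by
  obtain ⟨U, hU, hAU, hUB⟩ := normal_exists_closure_subset hA hB.isOpen_compl
    hAB.subset_compl_right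
  obtain ⟨V, hV, hBV, hVU⟩ := normal_exists_closure_subset hB isClosed_closure.isOpen_compl
    (subset_compl_comm.1 hUB)
  exact ⟨closure U, Filter.mem_of_superset (hU.mem_nhdsSet.2 hAU) subset_closure,
    closure V, Filter.mem_of_superset (hV.mem_nhdsSet.2 hBV) subset_closure,
    isClosed_closure, isClosed_closure, (disjoint_compl_left.mono_left hVU).symm⟩

theorem disjoint_closure_union_image_val {X : Type*} [TopologicalSpace X] {S : Set X}
    {A B B' : Set X} {U V : Set S} (hA : IsClosed A) (hAB : Disjoint A B) (hV : IsOpen V)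
    (hUV : Disjoint U V) (hAU : (↑) ⁻¹' A ⊆ U) (hB' : B' ∈ 𝓝ˢ B) (hBV : (↑) ⁻¹' B' ⊆ V) :
    Disjoint (closure (A ∪ (↑) '' U)) (B ∪ (↑) '' V) := by
  rw [closure_union, hA.closure_eq, disjoint_union_left, disjoint_union_right,
    disjoint_union_right]
  refine ⟨⟨hAB, ?_⟩, ?_, ?_⟩
  · rw [disjoint_left]
    rintro _ hxA ⟨x, hxV, rfl⟩
    exact hUV.notMem_of_mem_left (hAU hxA) hxV
  · refine (Disjoint.closure_left ?_ isOpen_interior).mono_right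
      (subset_interior_iff_mem_nhdsSet.2 hB')
    rw [disjoint_left]
    rintro _ ⟨x, hxU, rfl⟩ hxB'
    exact hUV.notMem_of_mem_left hxU (hBV (show (x : X) ∈ B' from interior_subset hxB'))
  · obtain ⟨W, hW, rfl⟩ := hV
    refine (Disjoint.closure_left ?_ hW).mono_right (image_preimage_subset _ _)
    rw [disjoint_left]
    rintro _ ⟨x, hxU, rfl⟩ hxW
    exact hUV.notMem_of_mem_left hxU hxW

theorem IsSeparator.exists_preimage_val_subset {X : Type*} [TopologicalSpace X]
    [CompletelyNormalSpace X] {S A A' B B' : Set X} {L : Set S}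
    (hL : IsSeparator ((↑) ⁻¹' A') ((↑) ⁻¹' B') L) (hA : IsClosed A) (hB : IsClosed B)
    (hAB : Disjoint A B) (hA' : A' ∈ 𝓝ˢ A) (hB' : B' ∈ 𝓝ˢ B) :
    ∃ M : Set X, IsSeparator A B M ∧ (↑) ⁻¹' M ⊆ L := by
  obtain ⟨-, U, V, hU, hV, hUV, hAU, hBV, hLUV⟩ := hL
  have hAU' : (↑) ⁻¹' A ⊆ U := (preimage_mono (subset_of_mem_nhdsSet hA')).trans hAU
  have hBV' : (↑) ⁻¹' B ⊆ V := (preimage_mono (subset_of_mem_nhdsSet hB')).trans hBV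
  obtain ⟨P, Q, hP, hQ, hAP, hBQ, hPQ⟩ := separatedNhds_iff_disjoint.2 <| completely_normal
    (disjoint_closure_union_image_val hA hAB hV hUV hAU' hB' hBV)
    (disjoint_closure_union_image_val hB hAB.symm hU hUV.symm hBV' hA' hAU).symm
  rw [union_subset_iff, image_subset_iff] at hAP hBQ
  refine ⟨(P ∪ Q)ᶜ, .compl_union hP hQ hPQ hAP.1 hBQ.1, ?_⟩
  rw [← compl_subset_compl, hLUV, preimage_compl, compl_compl]
  exact union_subset_union hAP.2 hBQ.2

theorem exists_isSeparator_disjoint_iInter_of_not_stronglyInfiniteDimensional {X : Type*}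
    [TopologicalSpace X] [CompletelyNormalSpace X] {S : Set X}
    (hS : ¬ StronglyInfiniteDimensional S) {A B : ℕ → Set X} (hA : ∀ n, IsClosed (A n))
    (hB : ∀ n, IsClosed (B n)) (hAB : ∀ n, Disjoint (A n) (B n)) :
    ∃ L : ℕ → Set X, (∀ n, IsSeparator (A n) (B n) (L n)) ∧ Disjoint S (⋂ n, L n) := by
  choose A' hA' B' hB' hA'c hB'c hAB' using fun n =>
    exists_isClosed_mem_nhdsSet_disjoint (hA n) (hB n) (hAB n)
  have hness : ¬ IsEssentialFamily (fun n => ((↑) : S → X) ⁻¹' A' n) (fun n => (↑) ⁻¹' B' n) :=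
    fun h => hS ⟨_, _, fun n => ⟨(hA'c n).preimage continuous_subtype_val,
      (hB'c n).preimage continuous_subtype_val, (hAB' n).preimage _⟩, h⟩
  simp only [IsEssentialFamily, not_forall, not_nonempty_iff_eq_empty] at hness
  obtain ⟨L, hL, hLempty⟩ := hness
  choose M hM hML using fun n =>
    (hL n).exists_preimage_val_subset (hA n) (hB n) (hAB n) (hA' n) (hB' n)
  refine ⟨M, hM, disjoint_left.2 fun x hxS hx => ?_⟩
  have : (⟨x, hxS⟩ : S) ∈ ⋂ n, L n := mem_iInter.2 fun n => hML n (mem_iInter.1 hx n)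
  simp [hLempty] at this

theorem exists_isClopen_of_forall_isConnected {X : Type*} [TopologicalSpace X] [CompactSpace X]
    [T2Space X] {A B : Set X} (hA : IsClosed A) (hB : IsClosed B)
    (h : ∀ K : Set X, IsClosed K → IsConnected K → (K ∩ A).Nonempty → ¬ (K ∩ B).Nonempty) :
    ∃ P : Set X, IsClopen P ∧ A ⊆ P ∧ Disjoint P B := by
  have hmk : Continuous ((↑) : X → ConnectedComponents X) := ConnectedComponents.continuous_coe
  have hdisj : (↑) '' A ⊆ ((↑) '' B : Set (ConnectedComponents X))ᶜ := by
    rintro _ ⟨a, ha, rfl⟩ ⟨b, hb, hba⟩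
    rw [ConnectedComponents.coe_eq_coe'] at hba
    exact h _ isClosed_connectedComponent isConnected_connectedComponent
      ⟨a, mem_connectedComponent, ha⟩ ⟨b, hba, hb⟩
  obtain ⟨P, hP, hAP, hPB⟩ := exists_clopen_of_closed_subset_open
    (hA.isCompact.image hmk).isClosed (hB.isCompact.image hmk).isClosed.isOpen_compl hdisj
  exact ⟨_, hP.preimage hmk, image_subset_iff.1 hAP,
    disjoint_left.2 fun x hxP hxB => hPB hxP (mem_image_of_mem _ hxB)⟩

theorem exists_isSeparator_disjoint_of_forall_isConnected {X : Type*} [TopologicalSpace X]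
    [CompactSpace X] [T2Space X] {A B Y : Set X} (hA : IsClosed A) (hB : IsClosed B)
    (hAB : Disjoint A B) (hY : IsClosed Y)
    (h : ∀ K ⊆ Y, IsCompact K → IsConnected K → (K ∩ A).Nonempty → ¬ (K ∩ B).Nonempty) :
    ∃ L, IsSeparator A B L ∧ Disjoint L Y := by
  have : CompactSpace Y := isCompact_iff_compactSpace.1 hY.isCompact
  obtain ⟨P, hP, hAP, hPB⟩ := exists_isClopen_of_forall_isConnected (X := Y)
    (hA.preimage continuous_subtype_val) (hB.preimage continuous_subtype_val) <| by
      rintro K hK hKc ⟨a, haK, haA⟩ ⟨b, hbK, hbB⟩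
      exact h ((↑) '' K) (Subtype.coe_image_subset _ _)
        (hK.isCompact.image continuous_subtype_val)
        (hKc.image _ continuous_subtype_val.continuousOn)
        ⟨a, mem_image_of_mem _ haK, haA⟩ ⟨b, mem_image_of_mem _ hbK, hbB⟩
  have himage {Q : Set Y} (hQ : IsClosed Q) : IsClosed ((↑) '' Q : Set X) :=
    hY.isClosedEmbedding_subtypeVal.isClosedMap _ hQ
  have hdisj : Disjoint (A ∪ (↑) '' P) (B ∪ (↑) '' Pᶜ) := by
    rw [disjoint_union_left, disjoint_union_right, disjoint_union_right]
    refine ⟨⟨hAB, disjoint_left.2 ?_⟩, disjoint_left.2 ?_,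
      (disjoint_image_iff Subtype.val_injective).2 disjoint_compl_right⟩
    · rintro _ hyA ⟨y, hyP, rfl⟩
      exact hyP (hAP hyA)
    · rintro _ ⟨y, hyP, rfl⟩ hyB
      exact hPB.notMem_of_mem_left hyP hyB
  obtain ⟨U, V, hU, hV, hAU, hBV, hUV⟩ := normal_separation (hA.union (himage hP.isClosed))
    (hB.union (himage hP.compl.isClosed)) hdisj
  rw [union_subset_iff, image_subset_iff] at hAU hBV
  refine ⟨(U ∪ V)ᶜ, .compl_union hU hV hUV hAU.1 hBV.1, disjoint_compl_left_iff_subset.2 ?_⟩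
  intro y hy
  exact (em ((⟨y, hy⟩ : Y) ∈ P)).imp (fun hyP => hAU.2 hyP) (fun hyP => hBV.2 hyP)

theorem IsEssentialFamily.exists_isCompact_isConnected {X Γ : Type*} [TopologicalSpace X]
    [CompactSpace X] [T2Space X] {A B : Option Γ → Set X} (hess : IsEssentialFamily A B)
    (hA : IsClosed (A none)) (hB : IsClosed (B none)) (hAB : Disjoint (A none) (B none))
    {L : Γ → Set X} (hL : ∀ i, IsSeparator (A (some i)) (B (some i)) (L i)) :
    ∃ K ⊆ ⋂ i, L i, IsCompact K ∧ IsConnected K ∧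
      (K ∩ A none).Nonempty ∧ (K ∩ B none).Nonempty := by
  by_contra! hno
  obtain ⟨L₀, hL₀, hdisj⟩ := exists_isSeparator_disjoint_of_forall_isConnected hA hB hAB
    (isClosed_iInter fun i => (hL i).1) fun K hK hKc hKconn hKA =>
      not_nonempty_iff_eq_empty.2 (hno K hK hKc hKconn hKA)
  obtain ⟨x, hx⟩ := hess (fun o => o.elim L₀ L) (Option.rec hL₀ hL)
  rw [mem_iInter] at hx
  exact hdisj.notMem_of_mem_left (hx none) (mem_iInter.2 fun i => hx (some i))

/-! ### Cubical cochains on a grid -/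

/-- Cubical cochains on the grid `ℕ^ι`: `ω v T` is the value of `ω` on the cube with least
vertex `v` whose edges point in the directions in `T`. Cochains of all degrees are treated
simultaneously, the degree being the cardinality of `T`. -/
abbrev GridCochain (ι R : Type*) : Type _ := (ι → ℕ) → Finset ι → R

/-- The vertices of the cube with least vertex `v` and edge directions `T`. -/
def gridCube {ι : Type*} (v : ι → ℕ) (T : Finset ι) : Set (ι → ℕ) :=
  {u | ∀ j, u j = v j ∨ j ∈ T ∧ u j = v j + 1}

/-- The least vertices of the unit cubes that make up the box of side `k` through `w` in the
directions `T`: coordinates in `T` range over `0, …, k - 1`, the others are those of `w`. -/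
def gridBox {ι : Type*} [Fintype ι] [DecidableEq ι] (k : ℕ) (T : Finset ι) (w : ι → ℕ) :
    Finset (ι → ℕ) :=
  Fintype.piFinset fun j => if j ∈ T then Finset.range k else {w j}

section Grid

variable {ι : Type*}

theorem left_mem_gridCube (v : ι → ℕ) (T : Finset ι) : v ∈ gridCube v T :=
  fun _ => Or.inl rfl

theorem apply_eq_of_mem_gridCube {v u : ι → ℕ} {T : Finset ι} {j : ι}
    (hu : u ∈ gridCube v T) (hj : j ∉ T) : u j = v j :=
  (hu j).resolve_right fun h => hj h.1

variable [DecidableEq ι]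

theorem gridCube_add_single_subset (v : ι → ℕ) {T : Finset ι} {i : ι} (hi : i ∈ T) :
    gridCube (v + Pi.single i 1) (T.erase i) ⊆ gridCube v T := by
  intro u hu j
  have := hu j
  grind [Pi.add_apply]

theorem add_single_mem_gridCube (v : ι → ℕ) {T : Finset ι} {i : ι} (hi : i ∈ T) :
    v + Pi.single i 1 ∈ gridCube v T :=
  gridCube_add_single_subset v hi (left_mem_gridCube _ _)

variable [Fintype ι]

theorem mem_gridBox {k : ℕ} {T : Finset ι} {w v : ι → ℕ} :
    v ∈ gridBox k T w ↔ ∀ j, if j ∈ T then v j < k else v j = w j := by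
  simp only [gridBox, Fintype.mem_piFinset]
  refine forall_congr' fun j => ?_
  split_ifs <;> simp

theorem gridBox_empty (k : ℕ) (w : ι → ℕ) : gridBox k ∅ w = {w} := by
  ext v
  simp [mem_gridBox, funext_iff]

variable {R : Type*}

theorem sum_gridBox_eq_sum_sum_gridBox_erase [AddCommMonoid R] (k : ℕ)
    {T : Finset ι} {i : ι} (hi : i ∈ T) (w : ι → ℕ) (f : (ι → ℕ) → R) :
    ∑ v ∈ gridBox k T w, f v =
      ∑ c ∈ Finset.range k, ∑ v ∈ gridBox k (T.erase i) (Function.update w i c), f v := by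
  have hmaps : ∀ v ∈ gridBox k T w, v i ∈ Finset.range k := fun v hv => by
    simpa [hi] using mem_gridBox.1 hv i
  rw [← Finset.sum_fiberwise_of_maps_to hmaps]
  refine Finset.sum_congr rfl fun c hc => Finset.sum_congr ?_ fun _ _ => rfl
  ext v
  simp only [Finset.mem_filter, mem_gridBox]
  grind

theorem sum_gridBox_add_single [AddCommMonoid R] (k : ℕ) {T : Finset ι} {i : ι}
    (hi : i ∉ T) (w : ι → ℕ) (c : ℕ) (f : (ι → ℕ) → R) :
    ∑ v ∈ gridBox k T (Function.update w i c), f (v + Pi.single i 1) =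
      ∑ v ∈ gridBox k T (Function.update w i (c + 1)), f v := by
  refine Finset.sum_nbij' (· + Pi.single i 1) (· - Pi.single i 1) ?_ ?_ ?_ ?_ fun _ _ => rfl
  all_goals
    simp only [mem_gridBox, funext_iff, Pi.add_apply, Pi.sub_apply]
    intro v hv j
    have := hv j
    grind

theorem sum_gridBox_add_single_add [Ring R] [CharP R 2] (k : ℕ) {T : Finset ι} {i : ι}
    (hi : i ∈ T) (w : ι → ℕ) (f : (ι → ℕ) → R) :
    ∑ v ∈ gridBox k T w, (f (v + Pi.single i 1) + f v) =
      ∑ v ∈ gridBox k (T.erase i) (Function.update w i k), f v +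
        ∑ v ∈ gridBox k (T.erase i) (Function.update w i 0), f v := by
  rw [sum_gridBox_eq_sum_sum_gridBox_erase k hi]
  simp only [Finset.sum_add_distrib, sum_gridBox_add_single k (T.notMem_erase i)]
  rw [← Finset.sum_add_distrib]
  simp only [← CharTwo.sub_eq_add]
  exact Finset.sum_range_sub
    (fun c => ∑ v ∈ gridBox k (T.erase i) (Function.update w i c), f v) k

end Grid

namespace GridCochain

variable {ι R : Type*} [DecidableEq ι] [Ring R]

/-- The coboundary modulo `2`: the sum over all facets. -/
def coboundary (ω : GridCochain ι R) : GridCochain ι R :=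
  fun v T => ∑ i ∈ T, (ω (v + Pi.single i 1) (T.erase i) + ω v (T.erase i))

/-- The cup product `df ∪ ω` of the coboundary of a `0`-cochain `f` with `ω`, modulo `2`. -/
def diffCup (f : (ι → ℕ) → R) (ω : GridCochain ι R) : GridCochain ι R :=
  fun v T => ∑ i ∈ T, (f (v + Pi.single i 1) + f v) * ω (v + Pi.single i 1) (T.erase i)

/-- The iterated cup product `dL i₁ ∪ ⋯ ∪ dL iₘ`, where `l = [i₁, …, iₘ]`. -/
def diffCupList (L : ι → (ι → ℕ) → R) : List ι → GridCochain ι R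
  | [] => fun _ T => if T = ∅ then 1 else 0
  | i :: l => diffCup (L i) (diffCupList L l)

theorem diffCupList_eq_zero_of_subsingleton (L : ι → (ι → ℕ) → R) [CharP R 2] {j : ι} :
    ∀ {l : List ι} {v : ι → ℕ} {T : Finset ι}, j ∈ l →
      (L j '' gridCube v T).Subsingleton → diffCupList L l v T = 0
  | i :: l, v, T, hj, hconst => by
    refine Finset.sum_eq_zero fun m hm => ?_
    obtain rfl | hjl := List.mem_cons.1 hj
    · have : L j (v + Pi.single m 1) = L j v :=
        hconst (mem_image_of_mem _ (add_single_mem_gridCube v hm))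
          (mem_image_of_mem _ (left_mem_gridCube v T))
      rw [this, CharTwo.add_self_eq_zero, zero_mul]
    · rw [diffCupList_eq_zero_of_subsingleton L hjl
        (hconst.anti (image_mono (gridCube_add_single_subset v hm))), mul_zero]

variable [CharP R 2]

theorem sum_sum_erase_eq_zero_of_symm (T : Finset ι) (F : ι → ι → R)
    (hF : ∀ i j, F i j = F j i) : ∑ i ∈ T, ∑ j ∈ T.erase i, F i j = 0 := by
  rw [Finset.sum_sigma']
  refine Finset.sum_involution (fun p _ => ⟨p.2, p.1⟩) ?_ ?_ ?_ ?_
  · rintro ⟨i, j⟩ -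
    rw [hF, CharTwo.add_self_eq_zero]
  all_goals grind

theorem coboundary_coboundary (ω : GridCochain ι R) : coboundary (coboundary ω) = 0 := by
  funext v T
  let F i j := ω (v + Pi.single i 1 + Pi.single j 1) ((T.erase i).erase j) +
    ω (v + Pi.single i 1) ((T.erase i).erase j) +
    (ω (v + Pi.single j 1) ((T.erase i).erase j) + ω v ((T.erase i).erase j))
  calc coboundary (coboundary ω) v T = ∑ i ∈ T, ∑ j ∈ T.erase i, F i j := by
        simp only [coboundary, ← Finset.sum_add_distrib, F]
    _ = 0 := sum_sum_erase_eq_zero_of_symm T F fun i j => by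
        simp only [F, Finset.erase_right_comm (a := j) (b := i), add_right_comm v]
        abel

theorem diffCup_add_mul_coboundary (f : (ι → ℕ) → R) (ω : GridCochain ι R) :
    (diffCup f ω + fun v T => f v * coboundary ω v T) = coboundary fun v T => f v * ω v T := by
  funext v T
  simp only [diffCup, coboundary, Pi.add_apply, Finset.mul_sum, ← Finset.sum_add_distrib]
  refine Finset.sum_congr rfl fun i _ => ?_
  rw [add_mul, mul_add, add_assoc, CharTwo.add_cancel_left]

theorem diffCup_eq_coboundary (f : (ι → ℕ) → R) {ω : GridCochain ι R}
    (hω : coboundary ω = 0) : diffCup f ω = coboundary fun v T => f v * ω v T := by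
  rw [← diffCup_add_mul_coboundary, hω]
  simp [funext_iff]

theorem coboundary_diffCupList (L : ι → (ι → ℕ) → R) :
    ∀ l, coboundary (diffCupList L l) = 0
  | [] => by
    funext v T
    exact Finset.sum_eq_zero fun i _ => CharTwo.add_self_eq_zero _
  | i :: l => by
    rw [diffCupList, diffCup_eq_coboundary _ (coboundary_diffCupList L l), coboundary_coboundary]

variable [Fintype ι]

theorem sum_gridBox_coboundary (k : ℕ) (T : Finset ι) (w : ι → ℕ) (ω : GridCochain ι R) :
    ∑ v ∈ gridBox k T w, coboundary ω v T =
      ∑ i ∈ T, (∑ v ∈ gridBox k (T.erase i) (Function.update w i k), ω v (T.erase i) +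
        ∑ v ∈ gridBox k (T.erase i) (Function.update w i 0), ω v (T.erase i)) := by
  simp only [coboundary]
  rw [Finset.sum_comm]
  exact Finset.sum_congr rfl fun i hi =>
    sum_gridBox_add_single_add k hi w fun v => ω v (T.erase i)

theorem apply_eq_of_mem_gridBox_erase_update {k c : ℕ} {T : Finset ι} {w v : ι → ℕ} {j : ι}
    (hv : v ∈ gridBox k (T.erase j) (Function.update w j c)) : v j = c := by
  simpa using mem_gridBox.1 hv j

theorem diffCupList_eq_zero_of_mem_face {L : ι → (ι → ℕ) → R} {k c : ℕ} {e : R} {j : ι}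
    (hL : ∀ x : ι → ℕ, x j = c → L j x = e) {l : List ι} (hj : j ∈ l) {T : Finset ι}
    {w v : ι → ℕ} (hv : v ∈ gridBox k (T.erase j) (Function.update w j c)) :
    diffCupList L l v (T.erase j) = 0 := by
  have hconst : ∀ u ∈ gridCube v (T.erase j), L j u = e := fun u hu => hL u <|
    (apply_eq_of_mem_gridCube hu (T.notMem_erase j)).trans (apply_eq_of_mem_gridBox_erase_update hv)
  refine diffCupList_eq_zero_of_subsingleton L hj ?_
  rintro _ ⟨a, ha, rfl⟩ _ ⟨b, hb, rfl⟩
  rw [hconst a ha, hconst b hb]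

-- By Stokes (`sum_gridBox_coboundary`) the sum lives on the facets of the box. On a facet
-- orthogonal to a direction of `l` the cup product over `l` vanishes, so only the two facets
-- orthogonal to `i` remain: there `L i` is `0` or `1`, leaving the same sum one dimension lower.
theorem sum_gridBox_diffCupList {k : ℕ} {L : ι → (ι → ℕ) → R}
    (h0 : ∀ i x, x i = 0 → L i x = 0) (hk : ∀ i x, x i = k → L i x = 1) :
    ∀ {l : List ι}, l.Nodup → ∀ w,
      ∑ v ∈ gridBox k l.toFinset w, diffCupList L l v l.toFinset = 1
  | [], _, w => by simp [gridBox_empty, diffCupList]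
  | i :: l, hl, w => by
    have hil : i ∉ l.toFinset := by simpa using (List.nodup_cons.1 hl).1
    rw [diffCupList, diffCup_eq_coboundary _ (coboundary_diffCupList L l),
      sum_gridBox_coboundary, List.toFinset_cons, Finset.sum_insert hil, Finset.erase_insert hil]
    have hface_top : ∑ v ∈ gridBox k l.toFinset (Function.update w i k),
        L i v * diffCupList L l v l.toFinset = 1 := by
      rw [← sum_gridBox_diffCupList h0 hk (List.nodup_cons.1 hl).2 (Function.update w i k)]
      refine Finset.sum_congr rfl fun v hv => ?_
      rw [hk i v (by simpa [hil] using mem_gridBox.1 hv i), one_mul]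
    have hface_bot : ∑ v ∈ gridBox k l.toFinset (Function.update w i 0),
        L i v * diffCupList L l v l.toFinset = 0 := by
      refine Finset.sum_eq_zero fun v hv => ?_
      rw [h0 i v (by simpa [hil] using mem_gridBox.1 hv i), zero_mul]
    rw [hface_top, hface_bot, add_zero, Finset.sum_eq_zero, add_zero]
    intro j hj
    rw [List.mem_toFinset] at hj
    rw [Finset.sum_eq_zero, Finset.sum_eq_zero, add_zero]
    · intro v hv
      rw [diffCupList_eq_zero_of_mem_face (h0 j) hj hv, mul_zero]
    · intro v hv
      rw [diffCupList_eq_zero_of_mem_face (hk j) hj hv, mul_zero]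

end GridCochain

theorem exists_gridCube_forall_nontrivial_image {ι : Type*} [Fintype ι] {R : Type*} [Ring R]
    [CharP R 2] {k : ℕ} {L : ι → (ι → ℕ) → R}
    (h0 : ∀ i x, x i = 0 → L i x = 0) (hk : ∀ i x, x i = k → L i x = 1) :
    ∃ v : ι → ℕ, (∀ i, v i < k) ∧ ∀ i, (L i '' gridCube v Finset.univ).Nontrivial := by
  classical
  have := CharP.nontrivial_of_char_ne_one (R := R) (v := 2) (by norm_num)
  have hsum := GridCochain.sum_gridBox_diffCupList h0 hk (Finset.nodup_toList Finset.univ) 0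
  rw [Finset.toList_toFinset] at hsum
  obtain ⟨v, hv, hne⟩ := Finset.exists_ne_zero_of_sum_ne_zero (hsum ▸ one_ne_zero)
  refine ⟨v, fun i => by simpa using mem_gridBox.1 hv i, fun i => ?_⟩
  rw [← not_subsingleton_iff]
  exact fun hconst => hne <|
    GridCochain.diffCupList_eq_zero_of_subsingleton L (by simp) hconst

/-! ### Opposite faces of a cube -/

section Cube

variable {ι : Type*}

/-- The vertices of the subdivision of the cube `I^ι` into cubes of side `1 / k`; a coordinate
of `x` exceeding `k` is truncated to `k`. -/
noncomputable def gridPoint (k : ℕ) (x : ι → ℕ) : ι → unitInterval :=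
  fun i => projIcc 0 1 zero_le_one (x i / k : ℝ)

theorem gridPoint_apply_of_eq_zero {k : ℕ} {x : ι → ℕ} {i : ι} (hx : x i = 0) :
    gridPoint k x i = 0 := by
  simp only [gridPoint, hx, Nat.cast_zero, zero_div]
  exact projIcc_left _

theorem gridPoint_apply_of_eq {k : ℕ} (hk : k ≠ 0) {x : ι → ℕ} {i : ι} (hx : x i = k) :
    gridPoint k x i = 1 := by
  simp only [gridPoint, hx, div_self (Nat.cast_ne_zero (R := ℝ).2 hk)]
  exact projIcc_right _

theorem dist_gridPoint_le_of_mem_gridCube [Fintype ι] {k : ℕ} {u v : ι → ℕ} {T : Finset ι}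
    (hu : u ∈ gridCube v T) : dist (gridPoint k u) (gridPoint k v) ≤ 1 / k := by
  have hk : (0 : ℝ) ≤ 1 / k := by positivity
  refine (dist_pi_le_iff hk).2 fun i => ?_
  calc dist (gridPoint k u i) (gridPoint k v i) ≤ dist (u i / k : ℝ) (v i / k) := by
        simpa [gridPoint] using
          (LipschitzWith.projIcc zero_le_one).dist_le_mul (u i / k : ℝ) (v i / k)
    _ ≤ 1 / k := by
        obtain hi | ⟨-, hi⟩ := hu i
        · simp [hi]
        · simp [hi, add_div]

theorem exists_ball_inter_nonempty_of_cubeFaces [Fintype ι] {V : ι → Set (ι → unitInterval)}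
    (h0 : ∀ i z, z i = 0 → z ∉ V i) (h1 : ∀ i z, z i = 1 → z ∈ V i) {δ : ℝ} (hδ : 0 < δ) :
    ∃ z, ∀ i, (Metric.ball z δ ∩ V i).Nonempty ∧ (Metric.ball z δ \ V i).Nonempty := by
  obtain ⟨n, hn⟩ := exists_nat_one_div_lt hδ
  let label (i : ι) (x : ι → ℕ) : ZMod 2 := (V i).indicator 1 (gridPoint (n + 1) x)
  obtain ⟨v, -, hv⟩ := exists_gridCube_forall_nontrivial_image (k := n + 1) (L := label)
    (fun i x hx => indicator_of_notMem (h0 i _ (gridPoint_apply_of_eq_zero hx)) _)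
    (fun i x hx => indicator_of_mem (h1 i _ (gridPoint_apply_of_eq n.succ_ne_zero hx)) _)
  have hball : ∀ u ∈ gridCube v Finset.univ,
      gridPoint (n + 1) u ∈ Metric.ball (gridPoint (n + 1) v) δ := fun u hu =>
    (dist_gridPoint_le_of_mem_gridCube hu).trans_lt (by exact_mod_cast hn)
  have hlabel (i : ι) (c : ZMod 2) : ∃ u ∈ gridCube v Finset.univ, label i u ≠ c := by
    obtain ⟨_, ⟨u, hu, rfl⟩, hne⟩ := (hv i).exists_ne c
    exact ⟨u, hu, hne⟩
  refine ⟨gridPoint (n + 1) v, fun i => ⟨?_, ?_⟩⟩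
  · obtain ⟨u, hu, hne⟩ := hlabel i 0
    exact ⟨_, hball u hu, mem_of_indicator_ne_zero hne⟩
  · obtain ⟨u, hu, hne⟩ := hlabel i 1
    exact ⟨_, hball u hu, fun hmem => hne (indicator_of_mem hmem _)⟩

theorem isEssentialFamily_cubeFaces_of_finite [Finite ι] :
    IsEssentialFamily (fun i => {z : ι → unitInterval | z i = 0}) fun i => {z | z i = 1} := by
  have := Fintype.ofFinite ι
  intro L hL
  by_contra hempty
  choose _ U V hU hV hUV hAU hBV hLUV using hL
  have hcover : univ ⊆ ⋃ s, Sum.elim U V s := by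
    rw [iUnion_sumElim, ← iUnion_union_distrib, ← iUnion_congr hLUV, ← compl_iInter,
      not_nonempty_iff_eq_empty.1 hempty, compl_empty]
  obtain ⟨δ, hδ, hball⟩ := lebesgue_number_lemma_of_metric isCompact_univ
    (Sum.rec hU hV : ∀ s, IsOpen (Sum.elim U V s)) hcover
  obtain ⟨z, hz⟩ := exists_ball_inter_nonempty_of_cubeFaces
    (fun i z hzi => (hUV i).notMem_of_mem_left (hAU i hzi)) (fun i z hzi => hBV i hzi) hδ
  obtain ⟨i | i, hi⟩ := hball z (mem_univ z)
  · obtain ⟨y, hy, hyV⟩ := (hz i).1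
    exact (hUV i).notMem_of_mem_left (hi hy) hyV
  · obtain ⟨y, hy, hyV⟩ := (hz i).2
    exact hyV (hi hy)

theorem isEssentialFamily_cubeFaces :
    IsEssentialFamily (fun i => {z : ι → unitInterval | z i = 0}) fun i => {z | z i = 1} := by
  classical
  refine .of_forall_finset fun t => ?_
  let extendZero (z : t → unitInterval) (i : ι) : unitInterval :=
    if hi : i ∈ t then z ⟨i, hi⟩ else 0
  have hcont : Continuous extendZero := by
    refine continuous_pi fun i => ?_
    by_cases hi : i ∈ t <;> simp only [extendZero, hi, dite_true, dite_false] <;> fun_prop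
  refine .of_preimage hcont ?_
  simpa [extendZero] using isEssentialFamily_cubeFaces_of_finite (ι := t)

theorem isClosed_cubeFace (i : ι) (c : unitInterval) :
    IsClosed {z : ι → unitInterval | z i = c} :=
  isClosed_eq (continuous_apply i) continuous_const

theorem disjoint_cubeFaces (i : ι) : Disjoint {z : ι → unitInterval | z i = 0} {z | z i = 1} :=
  disjoint_left.2 fun _ hz0 hz1 => zero_ne_one (hz0.symm.trans hz1)

theorem exists_isConnected_joining_cubeFaces_disjoint {S : Set (Option ℕ → unitInterval)}
    (hS : ¬ StronglyInfiniteDimensional S) :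
    ∃ K, Disjoint K S ∧ IsCompact K ∧ IsConnected K ∧
      (K ∩ {z | z none = 0}).Nonempty ∧ (K ∩ {z | z none = 1}).Nonempty := by
  obtain ⟨L, hL, hLS⟩ := exists_isSeparator_disjoint_iInter_of_not_stronglyInfiniteDimensional hS
    (fun n => isClosed_cubeFace (some n) 0) (fun n => isClosed_cubeFace (some n) 1)
    fun n => disjoint_cubeFaces (some n)
  obtain ⟨K, hKL, hK⟩ := isEssentialFamily_cubeFaces.exists_isCompact_isConnected
    (isClosed_cubeFace none 0) (isClosed_cubeFace none 1) (disjoint_cubeFaces none) hL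
  exact ⟨K, hLS.symm.mono_left hKL, hK⟩

end Cube

/-! ### Hilbert cubes in Banach spaces -/

theorem not_finiteDimensional_ker {K V W : Type*} [DivisionRing K] [AddCommGroup V] [Module K V]
    [AddCommGroup W] [Module K W] [FiniteDimensional K W] (hV : ¬ FiniteDimensional K V)
    (f : V →ₗ[K] W) : ¬ FiniteDimensional K f.ker := by
  intro hker
  have : FiniteDimensional K (V ⧸ f.ker) := f.quotKerEquivRange.symm.finiteDimensional
  exact hV (.of_submodule_quotient f.ker)

theorem exists_ne_zero_forall_apply_eq_zero {K V ι : Type*} [Field K] [AddCommGroup V]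
    [Module K V] (hV : ¬ FiniteDimensional K V) (s : Finset ι) (f : ι → Module.Dual K V) :
    ∃ v ≠ 0, ∀ i ∈ s, f i v = 0 := by
  have hker : (LinearMap.pi fun i : s => f i).ker ≠ ⊥ := fun hbot =>
    not_finiteDimensional_ker hV (LinearMap.pi fun i : s => f i) (hbot ▸ inferInstance)
  obtain ⟨v, hv, hv0⟩ := Submodule.exists_mem_ne_zero_of_ne_bot hker
  exact ⟨v, hv0, fun i hi => congrFun (LinearMap.mem_ker.1 hv) ⟨i, hi⟩⟩

theorem eq_zero_of_hasSum_smul_zero {K V : Type*} [Field K] [TopologicalSpace K] [T2Space K]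
    [AddCommGroup V] [Module K V] [TopologicalSpace V] {e : ℕ → V} {f : ℕ → StrongDual K V}
    (hdiag : ∀ n, f n (e n) = 1) (htri : ∀ m n, m < n → f m (e n) = 0) {c : ℕ → K}
    (hc : HasSum (fun n => c n • e n) 0) (n : ℕ) : c n = 0 := by
  induction n using Nat.strong_induction_on with
  | _ n ih =>
    have hoff : ∀ m ≠ n, f n (c m • e m) = 0 := fun m hmn => by
      rcases hmn.lt_or_gt with hlt | hgt
      · simp [ih m hlt]
      · simp [htri n m hgt]
    have hn : f n (c n • e n) = f n 0 := (hasSum_single n hoff).unique ((f n).hasSum hc)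
    simpa [hdiag] using hn

section Normed

variable {E : Type*} [NormedAddCommGroup E] [NormedSpace ℝ E]

theorem exists_seq_norm_eq_one_triangular (hE : ¬ FiniteDimensional ℝ E) :
    ∃ (e : ℕ → E) (f : ℕ → StrongDual ℝ E), (∀ n, ‖e n‖ = 1) ∧ (∀ n, f n (e n) = 1) ∧
      ∀ m n, m < n → f m (e n) = 0 := by
  obtain ⟨p, hp, htri⟩ := exists_seq_of_forall_finset_exists
    (fun p : E × StrongDual ℝ E => ‖p.1‖ = 1 ∧ p.2 p.1 = 1) (fun p q => p.2 q.1 = 0) <| by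
      intro s _
      obtain ⟨v, hv, hsv⟩ := exists_ne_zero_forall_apply_eq_zero hE s
        fun p => p.2.toLinearMap
      have hnorm : ‖(‖v‖⁻¹ • v)‖ = 1 := norm_smul_inv_norm (𝕜 := ℝ) hv
      obtain ⟨f, hf⟩ := SeparatingDual.exists_eq_one (R := ℝ)
        (norm_ne_zero_iff.1 (hnorm ▸ one_ne_zero))
      refine ⟨(‖v‖⁻¹ • v, f), ⟨hnorm, hf⟩, fun q hq => ?_⟩
      rw [map_smul, show q.2 v = 0 from hsv q hq, smul_zero]
  exact ⟨fun n => (p n).1, fun n => (p n).2, fun n => (hp n).1, fun n => (hp n).2, htri⟩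

variable [CompleteSpace E]

theorem exists_continuous_injective_hilbertCube (hE : ¬ FiniteDimensional ℝ E) :
    ∃ g : (ℕ → unitInterval) → E, Continuous g ∧ g.Injective := by
  obtain ⟨e, f, hnorm, hdiag, htri⟩ := exists_seq_norm_eq_one_triangular hE
  let term (n : ℕ) (z : ℕ → unitInterval) : E := ((1 / 2 : ℝ) ^ n * z n) • e n
  have hterm (n : ℕ) (z : ℕ → unitInterval) : ‖term n z‖ ≤ (1 / 2) ^ n := by
    rw [norm_smul, hnorm, mul_one, Real.norm_of_nonneg (mul_nonneg (by positivity) (z n).2.1)]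
    exact mul_le_of_le_one_right (by positivity) (z n).2.2
  have hsum (z : ℕ → unitInterval) : HasSum (term · z) (∑' n, term n z) :=
    (summable_geometric_two.of_norm_bounded (hterm · z)).hasSum
  refine ⟨fun z => ∑' n, term n z,
    continuous_tsum (fun n => by fun_prop) summable_geometric_two hterm, fun z w hzw => ?_⟩
  have hdiff := (hsum z).sub (hsum w)
  simp only [term, ← sub_smul, ← mul_sub, show ∑' n, term n z = ∑' n, term n w from hzw,
    sub_self] at hdiff
  refine funext fun n => Subtype.ext (sub_eq_zero.1 ?_)
  exact (mul_eq_zero.1 (eq_zero_of_hasSum_smul_zero hdiag htri hdiff n)).resolve_left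
    (by positivity)

theorem exists_continuous_hilbertCube_collapsing_faces (hE : ¬ FiniteDimensional ℝ E) {x y : E}
    (hxy : x ≠ y) :
    ∃ φ : (Option ℕ → unitInterval) → E, Continuous φ ∧ (∀ z, z none = 0 → φ z = x) ∧
      (∀ z, z none = 1 → φ z = y) ∧ InjOn φ {z | z none ≠ 0 ∧ z none ≠ 1} := by
  obtain ⟨f, hf⟩ := SeparatingDual.exists_eq_one (R := ℝ) (sub_ne_zero.2 hxy.symm)
  have : CompleteSpace f.ker := f.isClosed_ker.completeSpace_coe
  obtain ⟨g, hg, hginj⟩ := exists_continuous_injective_hilbertCube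
    (not_finiteDimensional_ker hE f.toLinearMap)
  let t (z : Option ℕ → unitInterval) : ℝ := z none
  let φ (z : Option ℕ → unitInterval) : E :=
    x + t z • (y - x) + (t z * (1 - t z)) • (g fun n => z (some n) : E)
  have hfφ (z : Option ℕ → unitInterval) : f (φ z) = f x + t z := by
    have hgz : f (g fun n => z (some n) : E) = 0 := (g fun n => z (some n)).2
    simp [φ, hgz, -map_sub, hf]
  refine ⟨φ, by fun_prop, fun z hz => by simp [φ, t, hz], fun z hz => by simp [φ, t, hz], ?_⟩
  rintro z ⟨hz0, hz1⟩ w - hzw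
  have ht : t z = t w := by
    simpa only [hfφ, add_right_inj] using congrArg f hzw
  have hcoef : t w * (1 - t w) ≠ 0 := ht ▸ mul_ne_zero
    (fun h => hz0 (Subtype.ext h)) fun h => hz1 (Subtype.ext (sub_eq_zero.1 h).symm)
  have hg_eq : (g fun n => z (some n)) = g fun n => w (some n) := by
    simpa [φ, ht, hcoef] using hzw
  funext o
  cases o with
  | none => exact Subtype.ext ht
  | some n => exact congrFun (hginj hg_eq) n

end Normed

/-! ### Complements of weakly infinite dimensional sets -/

theorem continuumConnected_compl_of_weaklyInfiniteDimensional_ellTwo_general {E : Type*}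
    [NormedAddCommGroup E] [NormedSpace ℝ E] [CompleteSpace E] (hE : ¬ FiniteDimensional ℝ E)
    (S : Set E) (hS : ¬ StronglyInfiniteDimensional S) :
    ∀ x ∈ Sᶜ, ∀ y ∈ Sᶜ, ∃ C : Set E,
      C ⊆ Sᶜ ∧ IsCompact C ∧ IsConnected C ∧ x ∈ C ∧ y ∈ C := by
  intro x hx y hy
  obtain rfl | hxy := eq_or_ne x y
  · exact ⟨{x}, singleton_subset_iff.2 hx, isCompact_singleton, isConnected_singleton, rfl, rfl⟩
  obtain ⟨φ, hφ, hφ0, hφ1, hinj⟩ := exists_continuous_hilbertCube_collapsing_faces hE hxy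
  have hne : φ ⁻¹' S ⊆ {z | z none ≠ 0 ∧ z none ≠ 1} := fun z hz =>
    ⟨fun hz0 => hx (hφ0 z hz0 ▸ hz), fun hz1 => hy (hφ1 z hz1 ▸ hz)⟩
  have hpre : ¬ StronglyInfiniteDimensional (φ ⁻¹' S) :=
    mt (StronglyInfiniteDimensional.of_preimage hφ hφ.isClosedMap (hinj.mono hne)) hS
  obtain ⟨K, hKS, hK, hKconn, ⟨a, haK, ha⟩, ⟨b, hbK, hb⟩⟩ :=
    exists_isConnected_joining_cubeFaces_disjoint hpre
  exact ⟨φ '' K, image_subset_iff.2 fun z hz hzS => hKS.notMem_of_mem_left hz hzS,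
    hK.image hφ, hKconn.image φ hφ.continuousOn, ⟨a, haK, hφ0 a ha⟩, ⟨b, hbK, hφ1 b hb⟩⟩

theorem not_finiteDimensional_ellTwo : ¬ FiniteDimensional ℝ EllTwo := by
  intro _
  have h := (HilbertBasis.ofRepr (LinearIsometryEquiv.refl ℝ EllTwo)).orthonormal.linearIndependent
  exact not_finite_iff_infinite.2 inferInstance h.finite

/-- If `S ⊆ ℓ²` is weakly infinite dimensional, then `ℓ² \ S` is continuum
connected: any two of its points lie in a compact connected subset of `ℓ² \ S`. -/
theorem continuumConnected_compl_of_weaklyInfiniteDimensional_ellTwo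
    (S : Set EllTwo) (hS : ¬ StronglyInfiniteDimensional S) :
    ∀ x ∈ Sᶜ, ∀ y ∈ Sᶜ, ∃ C : Set EllTwo,
      C ⊆ Sᶜ ∧ IsCompact C ∧ IsConnected C ∧ x ∈ C ∧ y ∈ C :=
  continuumConnected_compl_of_weaklyInfiniteDimensional_ellTwo_general
    not_finiteDimensional_ellTwo S hS
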